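/- Let K be a field of characteristic zero, let r_1, ..., r_k be distinct nonzero elements of K, and let p = x^{m_0} * prod_{i=1}^k (x - r_i)^{m_i} in K[x] with integers m_i >= 1 for 1 <= i <= k and m_0 >= 0. Let c_j denote the codegree-j coefficient of p (c_0 = 1), let c = (c_1, ..., c_k)^T, let m = (m_1, ..., m_k)^T (multiplicities viewed as elements of K), let V_0 be the k-by-k matrix with (i,j) entry r_j^i for 1 <= i, j <= k, let C be the k-by-k lower-triangular Toeplitz matrix with (i,j) entry c_{i-j} when i >= j and 0 otherwise, and let Lambda = -diag(1, 1/2, ..., 1/k). Then the matrix Lambda * C * V_0 is invertible and m = (Lambda * C * V_0)^{-1} * c. -/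

import Mathlib

open Polynomial Finset Matrix

lemma aux_rev {K : Type*} [Field K] (a : K) : (X - C a : K[X]).reverse = 1 - C a * X := by
  ext n
  rw [coeff_reverse, natDegree_X_sub_C]
  rcases n with _ | _ | n
  · simp [revAt_le]
  · simp [revAt_le, coeff_one]
  · rw [revAt_eq_self_of_lt (by omega)]
    simp [coeff_X, coeff_one, coeff_C]

lemma aux_prod_rev {K ι : Type*} [Field K] (s : Finset ι) (f : ι → K[X]) :
    (∏ i ∈ s, f i).reverse = ∏ i ∈ s, (f i).reverse := by
  classical
  induction s using Finset.induction_on with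
  | empty => simpa using reverse_C (1 : K)
  | insert a s ha ih => rw [prod_insert ha, prod_insert ha, reverse_mul_of_domain, ih]

lemma aux_pow_rev {K : Type*} [Field K] (f : K[X]) (n : ℕ) :
    (f ^ n).reverse = f.reverse ^ n := by
  have := aux_prod_rev (range n) (fun _ => f)
  simpa using this

lemma aux_mul {K : Type*} [Field K] {f g f' g' : PowerSeries K}
    (h : PowerSeries.derivative K f = -f * g) (h' : PowerSeries.derivative K f' = -f' * g') :
    PowerSeries.derivative K (f * f') = -(f * f') * (g + g') := by
  rw [Derivation.leibniz, h, h']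
  simp only [smul_eq_mul]
  ring

lemma aux_pow {K : Type*} [Field K] {f g : PowerSeries K}
    (h : PowerSeries.derivative K f = -f * g) (n : ℕ) :
    PowerSeries.derivative K (f ^ n) = -(f ^ n) * (n * g) := by
  induction n with
  | zero => simp
  | succ n ih =>
    rw [pow_succ, aux_mul ih h]
    push_cast
    ring

lemma aux_prod {K ι : Type*} [Field K] (s : Finset ι) {f g : ι → PowerSeries K}
    (h : ∀ i, PowerSeries.derivative K (f i) = -f i * g i) :
    PowerSeries.derivative K (∏ i ∈ s, f i) = -(∏ i ∈ s, f i) * (∑ i ∈ s, g i) := by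
  classical
  induction s using Finset.induction_on with
  | empty => simp
  | insert a s ha ih => rw [prod_insert ha, sum_insert ha, aux_mul (h a) ih]

lemma aux_lin {K : Type*} [Field K] (a : K) :
    PowerSeries.derivative K (((1 - C a * X : K[X]) : PowerSeries K)) =
      -((1 - C a * X : K[X]) : PowerSeries K) * (PowerSeries.mk fun n => a ^ (n + 1)) := by
  have h : ((1 - C a * X : K[X]) : PowerSeries K) = 1 - PowerSeries.C a * PowerSeries.X := by
    ext n
    simp
  rw [h]
  ext n
  rw [PowerSeries.coeff_derivative, neg_mul, sub_mul, one_mul, mul_assoc]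
  rcases n with _ | n
  · simp [PowerSeries.coeff_one]
  · simp [PowerSeries.coeff_one, PowerSeries.coeff_succ_X_mul, PowerSeries.coeff_X]
    ring

lemma aux_newton {K : Type*} [Field K] {k : ℕ} (r : Fin k → K) (m : Fin k → ℕ) (m0 : ℕ)
    (p : K[X]) (hp : p = X ^ m0 * ∏ i, (X - C (r i)) ^ m i) (n : ℕ) :
    p.reverse.coeff (n + 1) * (n + 1) =
      - ∑ j ∈ range (n + 1), p.reverse.coeff (n - j) * ∑ s, m s * r s ^ (j + 1) := by
  have hq : p.reverse = ∏ i, (1 - C (r i) * X) ^ m i := by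
    rw [hp, reverse_X_pow_mul, aux_prod_rev]
    simp_rw [aux_pow_rev, aux_rev]
  have hq' : (p.reverse : PowerSeries K) =
      ∏ i, ((1 - C (r i) * X : K[X]) : PowerSeries K) ^ m i := by
    rw [hq]
    have := map_prod (Polynomial.coeToPowerSeries.ringHom (R := K))
      (fun i => (1 - C (r i) * X) ^ m i) univ
    simpa only [map_pow, Polynomial.coeToPowerSeries.ringHom_apply] using this
  have h := aux_prod univ (fun i => aux_pow (aux_lin (r i)) (m i))
  rw [← hq'] at h
  have h2 := congrArg (PowerSeries.coeff n) h
  rw [PowerSeries.coeff_derivative, Polynomial.coeff_coe] at h2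
  rw [h2, neg_mul, map_neg, mul_comm, PowerSeries.coeff_mul,
    Finset.Nat.sum_antidiagonal_eq_sum_range_succ_mk]
  congr 1
  refine sum_congr rfl fun j _ => ?_
  rw [Polynomial.coeff_coe, mul_comm, map_sum]
  congr 1
  refine sum_congr rfl fun s _ => ?_
  rw [← map_natCast (PowerSeries.C (R := K)), PowerSeries.coeff_C_mul, PowerSeries.coeff_mk]

/-- The explicit formula `m = (Λ C V₀)⁻¹ c` from the proof of Theorem 1:
the multiplicity vector is recovered from the first `k` proper leading
coefficients via the shifted Vandermonde matrix `V₀`, the Toeplitz matrix `C`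
of leading coefficients and `Λ = -diag(1, 1/2, …, 1/k)`. -/
theorem multiplicity_formula
    {K : Type*} [Field K] [CharZero K] {k : ℕ}
    (r : Fin k → K) (hr : Function.Injective r) (hr0 : ∀ i, r i ≠ 0)
    (m : Fin k → ℕ) (hm : ∀ i, 1 ≤ m i) (m0 : ℕ)
    (p : K[X]) (hp : p = X ^ m0 * ∏ i, (X - C (r i)) ^ m i)
    (c : Fin k → K) (hc : ∀ j : Fin k, c j = p.coeff (p.natDegree - ((j : ℕ) + 1)))
    (V0 : Matrix (Fin k) (Fin k) K)
    (hV0 : ∀ i j : Fin k, V0 i j = r j ^ ((i : ℕ) + 1))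
    (Cm : Matrix (Fin k) (Fin k) K)
    (hCm : ∀ i j : Fin k, Cm i j =
      if (j : ℕ) ≤ (i : ℕ) then p.coeff (p.natDegree - ((i : ℕ) - (j : ℕ))) else 0)
    (Λ : Matrix (Fin k) (Fin k) K)
    (hΛ : Λ = Matrix.diagonal fun i : Fin k => -(1 / (((i : ℕ) + 1 : ℕ) : K))) :
    IsUnit (Λ * Cm * V0) ∧
      (fun i : Fin k => (m i : K)) = (Λ * Cm * V0)⁻¹ *ᵥ c := by
  have hmon : p.Monic := by
    rw [hp]
    exact (monic_X_pow m0).mul (monic_prod_of_monic _ _ fun i _ => (monic_X_sub_C (r i)).pow _)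
  have hdeg : k ≤ p.natDegree := by
    rw [hp, Monic.natDegree_mul (monic_X_pow m0)
      (monic_prod_of_monic _ _ fun i _ => (monic_X_sub_C (r i)).pow _),
      natDegree_prod_of_monic _ _ (fun i _ => (monic_X_sub_C (r i)).pow _)]
    simp only [natDegree_pow, natDegree_X_sub_C, mul_one]
    have : ∑ i : Fin k, 1 ≤ ∑ i, m i := sum_le_sum fun i _ => hm i
    simp at this
    omega
  have hrev : ∀ n, n ≤ k → p.coeff (p.natDegree - n) = p.reverse.coeff n := by
    intro n hn
    rw [coeff_reverse, revAt_le (by omega)]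
  have hdet : (Λ * Cm * V0).det ≠ 0 := by
    rw [det_mul, det_mul]
    refine mul_ne_zero (mul_ne_zero ?_ ?_) ?_
    · rw [hΛ, det_diagonal, prod_ne_zero_iff]
      intro i _
      have : (((i : ℕ) + 1 : ℕ) : K) ≠ 0 := Nat.cast_ne_zero.mpr (by omega)
      simpa using this
    · have hlt : Cm.BlockTriangular OrderDual.toDual := by
        intro i j hij
        have hij' : i < j := hij
        rw [hCm, if_neg]
        have : (i : ℕ) < j := hij'
        omega
      rw [det_of_lowerTriangular Cm hlt, prod_ne_zero_iff]
      intro i _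
      rw [hCm]
      simp [hmon]
    · have : V0 = (vandermonde r)ᵀ * diagonal r := by
        ext i j
        rw [hV0, mul_diagonal, transpose_apply, vandermonde_apply, pow_succ]
      rw [this, det_mul, det_transpose, det_diagonal]
      exact mul_ne_zero (det_vandermonde_ne_zero_iff.mpr hr) (prod_ne_zero_iff.mpr fun i _ => hr0 i)
  have hu : IsUnit (Λ * Cm * V0).det := hdet.isUnit
  have key : (Λ * Cm * V0) *ᵥ (fun i : Fin k => (m i : K)) = c := by
    rw [← mulVec_mulVec, ← mulVec_mulVec, hΛ]
    ext i
    rw [mulVec_diagonal, hc, hrev _ (by omega)]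
    have hn := aux_newton r m m0 p hp i
    have hi : (((i : ℕ) + 1 : ℕ) : K) ≠ 0 := Nat.cast_ne_zero.mpr (by omega)
    have hs : (Cm *ᵥ (V0 *ᵥ fun i : Fin k => (m i : K))) i =
        ∑ j ∈ range ((i : ℕ) + 1), p.reverse.coeff (i - j) * ∑ s, m s * r s ^ (j + 1) := by
      have h1 : (Cm *ᵥ (V0 *ᵥ fun i : Fin k => (m i : K))) i =
          ∑ j : Fin k, (fun j : ℕ => if j ≤ (i : ℕ) then
            p.reverse.coeff (i - j) * ∑ s, m s * r s ^ (j + 1) else 0) (j : ℕ) := by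
        simp only [mulVec, dotProduct]
        refine sum_congr rfl fun j _ => ?_
        rw [hCm]
        simp only [hV0]
        split_ifs
        · rw [hrev _ (by omega)]
          congr 1
          exact sum_congr rfl fun s _ => mul_comm _ _
        · simp
      rw [h1, Fin.sum_univ_eq_sum_range (fun j : ℕ => if j ≤ (i : ℕ) then
            p.reverse.coeff (i - j) * ∑ s, m s * r s ^ (j + 1) else 0), ← sum_filter]
      refine sum_congr ?_ fun _ _ => rfl
      ext j
      simp only [mem_filter, mem_range]
      omega
    rw [hs]
    rw [← neg_eq_iff_eq_neg] at hn
    rw [← hn]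
    push_cast at hi ⊢
    field_simp
  refine ⟨(isUnit_iff_isUnit_det _).mpr hu, ?_⟩
  rw [← key, mulVec_mulVec, nonsing_inv_mul _ hu, one_mulVec]
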